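/- arXiv:1810.10695 — 3 statements merged into one kernel-verified Lean document; each statement's English description precedes it below -/
import Mathlib

section
/- Let W, D : ℝ → (n×n real matrices) be differentiable at t with W(s), D(s) symmetric near t, and let λ_1,…,λ_n : ℝ → ℝ and ψ_1,…,ψ_n : ℝ → ℝⁿ be differentiable at t, satisfying for s near t the eigen-equations W(s)ψ_k(s) = λ_k(s)D(s)ψ_k(s) and the D-orthonormality ψ_k(s)ᵀD(s)ψ_j(s) = δ_{kj} for all k,j, and suppose D(t) is invertible and the eigenvalues λ_1(t),…,λ_n(t) are pairwise distinct. Then for each k, ψ_k'(t) = −(1/2)(ψ_k(t)ᵀD'(t)ψ_k(t))·ψ_k(t) + Σ_{j≠k} [ψ_j(t)ᵀ(W'(t) − λ_k(t)D'(t))ψ_k(t) / (λ_k(t) − λ_j(t))]·ψ_j(t). -/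
open Matrix Finset

/-- Product rule for the dot product of two vector-valued functions. -/
theorem hasDerivAt_dotProduct {ι : Type*} [Fintype ι] {u v : ℝ → ι → ℝ} {u' v' : ι → ℝ} {t : ℝ}
    (hu : ∀ i, HasDerivAt (fun s => u s i) (u' i) t)
    (hv : ∀ i, HasDerivAt (fun s => v s i) (v' i) t) :
    HasDerivAt (fun s => u s ⬝ᵥ v s) (u' ⬝ᵥ v t + u t ⬝ᵥ v') t := by
  simp only [dotProduct, ← Finset.sum_add_distrib]
  exact HasDerivAt.fun_sum fun i _ => (hu i).mul (hv i)

/-- Product rule for a matrix-valued function applied to a vector-valued one. -/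
theorem hasDerivAt_mulVec {m ι : Type*} [Fintype ι] {A : ℝ → Matrix m ι ℝ} {A' : Matrix m ι ℝ}
    {v : ℝ → ι → ℝ} {v' : ι → ℝ} {t : ℝ}
    (hA : ∀ i j, HasDerivAt (fun s => A s i j) (A' i j) t)
    (hv : ∀ i, HasDerivAt (fun s => v s i) (v' i) t) (i : m) :
    HasDerivAt (fun s => (A s *ᵥ v s) i) ((A' *ᵥ v t + A t *ᵥ v') i) t :=
  hasDerivAt_dotProduct (hA i) hv

theorem Matrix.IsSymm.dotProduct_mulVec_comm {ι R : Type*} [Fintype ι] [CommSemiring R]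
    {A : Matrix ι ι R} (hA : A.IsSymm) (u v : ι → R) : u ⬝ᵥ A *ᵥ v = v ⬝ᵥ A *ᵥ u := by
  rw [dotProduct_mulVec, ← mulVec_transpose, hA.eq, dotProduct_comm]

/-- Expansion of a vector in a basis that is orthonormal for the bilinear form of `D`. -/
theorem eq_sum_of_orthonormal_form {ι R : Type*} [Fintype ι] [DecidableEq ι] [CommRing R]
    {D : Matrix ι ι R} {ψ : ι → ι → R}
    (h : ∀ k j, ψ k ⬝ᵥ D *ᵥ ψ j = if k = j then 1 else 0) (v : ι → R) (i : ι) :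
    v i = ∑ j, (ψ j ⬝ᵥ D *ᵥ v) * ψ j i := by
  have hP : of ψ * (D * (of ψ)ᵀ) = 1 := by
    ext k j
    rw [one_apply, ← h k j]
    rfl
  have hP' : (of ψ)ᵀ * (of ψ * D) = 1 := by
    rw [← Matrix.mul_assoc] at hP
    exact mul_eq_one_comm.mp hP
  have hv : (of ψ)ᵀ *ᵥ (of ψ *ᵥ (D *ᵥ v)) = v := by
    rw [mulVec_mulVec, mulVec_mulVec, Matrix.mul_assoc, hP', one_mulVec]
  calc v i = ((of ψ)ᵀ *ᵥ (of ψ *ᵥ (D *ᵥ v))) i := by rw [hv]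
    _ = ∑ j, (ψ j ⬝ᵥ D *ᵥ v) * ψ j i := Finset.sum_congr rfl fun j _ => mul_comm _ _

/-- Hadamard variation formula for generalized eigenvectors: with a full
`D(t)`-orthonormal family of generalized eigenpairs, `D(t)` invertible and the eigenvalues
pairwise distinct at `t`,
`ψ_k'(t) = −(1/2)(ψ_kᵀD'ψ_k)ψ_k + ∑_{j≠k} [ψ_jᵀ(W'−λ_k D')ψ_k / (λ_k−λ_j)] ψ_j`. -/
theorem hadamard_eigenvector_variation {n : ℕ}
    (W D : ℝ → Matrix (Fin n) (Fin n) ℝ)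
    (Wd Dd : Matrix (Fin n) (Fin n) ℝ) (t : ℝ)
    (hW : ∀ i j, HasDerivAt (fun s => W s i j) (Wd i j) t)
    (hD : ∀ i j, HasDerivAt (fun s => D s i j) (Dd i j) t)
    (hWsymm : ∀ᶠ s in nhds t, (W s).IsSymm)
    (hDsymm : ∀ᶠ s in nhds t, (D s).IsSymm)
    (lam : Fin n → ℝ → ℝ) (lamd : Fin n → ℝ)
    (hlam : ∀ k, HasDerivAt (lam k) (lamd k) t)
    (ψ : Fin n → ℝ → Fin n → ℝ) (ψd : Fin n → Fin n → ℝ)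
    (hψ : ∀ k i, HasDerivAt (fun s => ψ k s i) (ψd k i) t)
    (heig : ∀ k, ∀ᶠ s in nhds t,
      (W s).mulVec (ψ k s) = lam k s • (D s).mulVec (ψ k s))
    (horth : ∀ k j, ∀ᶠ s in nhds t,
      ψ k s ⬝ᵥ (D s).mulVec (ψ j s) = if k = j then 1 else 0)
    (hDinv : IsUnit (D t))
    (hdist : Function.Injective fun k => lam k t) :
    ∀ k i, ψd k i =
      -(1 / 2) * (ψ k t ⬝ᵥ Dd.mulVec (ψ k t)) * ψ k t i
        + ∑ j ∈ Finset.univ.erase k,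
            ((ψ j t ⬝ᵥ (Wd - lam k t • Dd).mulVec (ψ k t)) / (lam k t - lam j t))
              * ψ j t i := by
  intro k i
  have hWt := hWsymm.self_of_nhds
  have hDt := hDsymm.self_of_nhds
  have horth_t : ∀ k j, ψ k t ⬝ᵥ D t *ᵥ ψ j t = if k = j then 1 else 0 :=
    fun k j => (horth k j).self_of_nhds
  have hdiag : ψ k t ⬝ᵥ D t *ᵥ ψd k = -(1 / 2) * (ψ k t ⬝ᵥ Dd *ᵥ ψ k t) := by
    have hconst := (hasDerivAt_const t (if k = k then (1 : ℝ) else 0)).congr_of_eventuallyEq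
      (horth k k)
    have heq := (hasDerivAt_dotProduct (hψ k) (hasDerivAt_mulVec hD (hψ k))).unique hconst
    rw [dotProduct_add, hDt.dotProduct_mulVec_comm (ψd k)] at heq
    linarith
  have hderiv : Wd *ᵥ ψ k t + W t *ᵥ ψd k =
      lamd k • D t *ᵥ ψ k t + lam k t • (Dd *ᵥ ψ k t + D t *ᵥ ψd k) := by
    ext m
    exact ((hasDerivAt_mulVec hW (hψ k) m).unique
      (((hlam k).mul (hasDerivAt_mulVec hD (hψ k) m)).congr_of_eventuallyEq
        ((heig k).mono fun s hs => congrFun hs m)))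
  have hoff : ∀ j, j ≠ k → ψ j t ⬝ᵥ D t *ᵥ ψd k =
      (ψ j t ⬝ᵥ (Wd - lam k t • Dd) *ᵥ ψ k t) / (lam k t - lam j t) := by
    intro j hjk
    have hne : lam k t - lam j t ≠ 0 := sub_ne_zero.mpr fun h => hjk (hdist h).symm
    have hWj : ψ j t ⬝ᵥ W t *ᵥ ψd k = lam j t * (ψ j t ⬝ᵥ D t *ᵥ ψd k) := by
      rw [hWt.dotProduct_mulVec_comm, (heig j).self_of_nhds, dotProduct_smul, smul_eq_mul,
        hDt.dotProduct_mulVec_comm]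
    have heq := congrArg (ψ j t ⬝ᵥ ·) hderiv
    simp only [dotProduct_add, dotProduct_smul, smul_eq_mul, hWj, horth_t, if_neg hjk] at heq
    rw [eq_div_iff hne, sub_mulVec, smul_mulVec, dotProduct_sub, dotProduct_smul, smul_eq_mul]
    linarith
  rw [eq_sum_of_orthonormal_form horth_t (ψd k) i, ← Finset.add_sum_erase _ _ (Finset.mem_univ k),
    hdiag]
  congr 1
  exact Finset.sum_congr rfl fun j hj => by rw [hoff j (Finset.ne_of_mem_erase hj)]
end

section
/- Let Ψ be an n×n real matrix whose columns ψ_1,…,ψ_n satisfy ΨᵀDΨ = Id, where D is diagonal with diagonal entries d(x) ≥ d0_low > 0, and let λ_1,…,λ_n be real numbers. Let E be a symmetric nonnegative matrix supported only on cross entries of a partition V = B ∪ C, with C_conn = Σ_{y∈B,z∈C}E(y,z). Let I be a subset of indices such that |λ_k − λ_j| ≥ Δ > 0 for all k∈I, j∉I, put S(y) = Σ_{k∈I} ψ_k(y)² and S̄ = max_{y∈V} S(y). Then for every x∈V, |2 Σ_{k∈I} Σ_{j∉I} (ψ_jᵀ E ψ_k / (λ_k − λ_j)) ψ_k(x) ψ_j(x)|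 ≤ (2/Δ) · S̄ · (2·C_conn/d0_low). -/
open Finset

/-- A square `D`-orthonormal family is complete: `d(y) · ∑ₖ ψₖ(y)² = 1`. -/
lemma mul_sum_sq_eq_one_of_weighted_orthonormal {V : Type*} [Fintype V] [DecidableEq V]
    (d : V → ℝ) (ψ : V → V → ℝ)
    (horth : ∀ k l, ∑ x, ψ k x * d x * ψ l x = if k = l then 1 else 0) (y : V) :
    d y * ∑ k, ψ k y ^ 2 = 1 := by
  have h : Matrix.of ψ * Matrix.of (fun x k => d x * ψ k x) = 1 := by
    ext k l
    simp only [Matrix.mul_apply, Matrix.of_apply, Matrix.one_apply, ← horth k l, mul_assoc]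
  have h' := Matrix.ext_iff.mpr (mul_eq_one_comm.mp h) y y
  simp only [Matrix.mul_apply, Matrix.of_apply, Matrix.one_apply_eq] at h'
  rw [← h', Finset.mul_sum]
  exact Finset.sum_congr rfl fun k _ => by ring

lemma sum_abs_mul_abs_le_of_sum_sq_le {ι : Type*} (s : Finset ι) (a b : ι → ℝ) {M : ℝ}
    (ha : ∑ i ∈ s, a i ^ 2 ≤ M) (hb : ∑ i ∈ s, b i ^ 2 ≤ M) :
    ∑ i ∈ s, |a i| * |b i| ≤ M := by
  have h : ∑ i ∈ s, |a i| * |b i| ≤ ∑ i ∈ s, (a i ^ 2 + b i ^ 2) / 2 :=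
    Finset.sum_le_sum fun i _ => by
      nlinarith [sq_nonneg (|a i| - |b i|), sq_abs (a i), sq_abs (b i)]
  rw [← Finset.sum_div, Finset.sum_add_distrib] at h
  linarith

/-- The entries of a symmetric matrix supported on the cross entries of a partition sum to
twice the sum over one off-diagonal block. -/
lemma sum_entries_eq_two_mul_sum_cross {V : Type*} [Fintype V] [DecidableEq V]
    {B C : Finset V} (hdisj : Disjoint B C) (hunion : B ∪ C = Finset.univ)
    {E : Matrix V V ℝ} (hEsymm : E.IsSymm)
    (hEcross : ∀ x y, ¬((x ∈ B ∧ y ∈ C) ∨ (x ∈ C ∧ y ∈ B)) → E x y = 0) :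
    ∑ y, ∑ z, E y z = 2 * ∑ y ∈ B, ∑ z ∈ C, E y z := by
  have hnot : ∀ x ∈ B, x ∉ C := fun x hB hC => Finset.disjoint_left.mp hdisj hB hC
  have hBB : ∑ y ∈ B, ∑ z ∈ B, E y z = 0 :=
    Finset.sum_eq_zero fun y hy => Finset.sum_eq_zero fun z hz => hEcross y z (by grind)
  have hCC : ∑ y ∈ C, ∑ z ∈ C, E y z = 0 :=
    Finset.sum_eq_zero fun y hy => Finset.sum_eq_zero fun z hz => hEcross y z (by grind)
  have hCB : ∑ y ∈ C, ∑ z ∈ B, E y z = ∑ y ∈ B, ∑ z ∈ C, E y z := by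
    refine Finset.sum_comm.trans ?_
    exact Finset.sum_congr rfl fun y _ => Finset.sum_congr rfl fun z _ => hEsymm.apply y z
  simp only [← hunion, Finset.sum_union hdisj, Finset.sum_add_distrib, hBB, hCC, hCB]
  ring

/-- Separating the indices `k`, `j` in a sum of bilinear forms divided by gaps at least `Δ`. -/
lemma abs_sum_bilin_div_gap_le {V K : Type*} [Fintype V] (s t : Finset K)
    {E : Matrix V V ℝ} (hE : ∀ y z, 0 ≤ E y z) (ψ : K → V → ℝ) (g : K → K → ℝ) {Δ : ℝ}
    (hΔ : 0 < Δ) (hg : ∀ k ∈ s, ∀ j ∈ t, Δ ≤ |g k j|) (x : V) :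
    |∑ k ∈ s, ∑ j ∈ t, ((∑ y, ∑ z, ψ j y * E y z * ψ k z) / g k j) * ψ k x * ψ j x|
      ≤ ∑ y, ∑ z, E y z / Δ *
          ((∑ k ∈ s, |ψ k z| * |ψ k x|) * ∑ j ∈ t, |ψ j y| * |ψ j x|) := by
  have hterm : ∀ k ∈ s, ∀ j ∈ t,
      |((∑ y, ∑ z, ψ j y * E y z * ψ k z) / g k j) * ψ k x * ψ j x|
        ≤ ∑ y, ∑ z, E y z / Δ * ((|ψ k z| * |ψ k x|) * (|ψ j y| * |ψ j x|)) := by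
    intro k hk j hj
    have hbilin : |∑ y, ∑ z, ψ j y * E y z * ψ k z| ≤ ∑ y, ∑ z, |ψ j y| * E y z * |ψ k z| := by
      refine (Finset.abs_sum_le_sum_abs _ _).trans (Finset.sum_le_sum fun y _ => ?_)
      refine (Finset.abs_sum_le_sum_abs _ _).trans (Finset.sum_le_sum fun z _ => ?_)
      rw [abs_mul, abs_mul, abs_of_nonneg (hE y z)]
    have hgap := hg k hk j hj
    have hquot : |∑ y, ∑ z, ψ j y * E y z * ψ k z| / |g k j|
        ≤ (∑ y, ∑ z, |ψ j y| * E y z * |ψ k z|) / Δ :=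
      div_le_div₀ ((abs_nonneg _).trans hbilin) hbilin hΔ hgap
    rw [abs_mul, abs_mul, abs_div]
    calc _ ≤ (∑ y, ∑ z, |ψ j y| * E y z * |ψ k z|) / Δ * |ψ k x| * |ψ j x| := by gcongr
      _ = _ := by
        simp only [Finset.sum_div, Finset.sum_mul]
        exact Finset.sum_congr rfl fun y _ => Finset.sum_congr rfl fun z _ => by ring
  calc _ ≤ ∑ k ∈ s, ∑ j ∈ t,
        ∑ y, ∑ z, E y z / Δ * ((|ψ k z| * |ψ k x|) * (|ψ j y| * |ψ j x|)) := by
        refine (Finset.abs_sum_le_sum_abs _ _).trans (Finset.sum_le_sum fun k hk => ?_)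
        exact (Finset.abs_sum_le_sum_abs _ _).trans (Finset.sum_le_sum (hterm k hk))
    _ = ∑ y, ∑ z, ∑ k ∈ s, ∑ j ∈ t,
        E y z / Δ * ((|ψ k z| * |ψ k x|) * (|ψ j y| * |ψ j x|)) := by
        rw [Finset.sum_comm_cycle]
        refine Finset.sum_congr rfl fun y _ => ?_
        rw [Finset.sum_comm_cycle]
    _ = _ := by
        simp only [Finset.sum_mul_sum]
        simp only [Finset.mul_sum]

/-- Bound on the cross (`I` vs `Iᶜ`) term of the evolution of the spectral
embedding norm: with a complete `D`-orthonormal family `ψ_k` (`d(x) ≥ d0low > 0`), real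
numbers `λ_k` with `|λ_k − λ_j| ≥ Δ > 0` for `k ∈ I`, `j ∉ I`, `S(y) = ∑_{k∈I} ψ_k(y)²`
and `S̄ = max_y S(y)`,
`|2∑_{k∈I,j∉I} (ψ_jᵀEψ_k/(λ_k−λ_j)) ψ_k(x)ψ_j(x)| ≤ (2/Δ)·S̄·(2 C_conn/d0low)`. -/
theorem embedding_norm_cross_term_bound
    {V : Type*} [Fintype V] [DecidableEq V] [Nonempty V]
    (B C : Finset V) (hdisj : Disjoint B C) (hunion : B ∪ C = Finset.univ)
    (hBne : B.Nonempty) (hCne : C.Nonempty)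
    (E : Matrix V V ℝ) (hEsymm : E.IsSymm) (hEnonneg : ∀ x y, 0 ≤ E x y)
    (hEcross : ∀ x y, ¬((x ∈ B ∧ y ∈ C) ∨ (x ∈ C ∧ y ∈ B)) → E x y = 0)
    (Cconn : ℝ) (hCconn : Cconn = ∑ y ∈ B, ∑ z ∈ C, E y z)
    (d : V → ℝ) (d0low : ℝ) (hd0pos : 0 < d0low) (hdlow : ∀ x, d0low ≤ d x)
    -- complete D-orthonormal family (a square matrix of columns, indexed by k : V)
    (ψ : V → V → ℝ)
    (horth : ∀ k l, ∑ x, ψ k x * d x * ψ l x = if k = l then 1 else 0)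
    (lam : V → ℝ)
    (I : Finset V)
    (Δ : ℝ) (hΔ : 0 < Δ)
    (hgap : ∀ k ∈ I, ∀ j ∉ I, Δ ≤ |lam k - lam j|)
    (Sbar : ℝ)
    (hSbar : Sbar = Finset.univ.sup' Finset.univ_nonempty (fun y => ∑ k ∈ I, (ψ k y) ^ 2)) :
    ∀ x, |2 * ∑ k ∈ I, ∑ j ∈ Iᶜ,
        ((∑ y, ∑ z, ψ j y * E y z * ψ k z) / (lam k - lam j)) * ψ k x * ψ j x|
      ≤ (2 / Δ) * Sbar * (2 * Cconn / d0low) := by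
  intro x
  have hS : ∀ y, ∑ k ∈ I, ψ k y ^ 2 ≤ Sbar := fun y => by
    rw [hSbar]
    exact Finset.le_sup' (fun y => ∑ k ∈ I, ψ k y ^ 2) (Finset.mem_univ y)
  have hSbar_nonneg : 0 ≤ Sbar := (Finset.sum_nonneg fun k _ => sq_nonneg _).trans (hS x)
  have hcompl : ∀ y, ∑ j ∈ Iᶜ, ψ j y ^ 2 ≤ 1 / d0low := fun y => by
    have hsum : ∑ j ∈ Iᶜ, ψ j y ^ 2 ≤ ∑ j, ψ j y ^ 2 :=
      Finset.sum_le_sum_of_subset_of_nonneg (Finset.subset_univ _) fun j _ _ => sq_nonneg _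
    have hfull := mul_sum_sq_eq_one_of_weighted_orthonormal d ψ horth y
    have hnonneg : 0 ≤ ∑ j, ψ j y ^ 2 := Finset.sum_nonneg fun j _ => sq_nonneg _
    rw [le_div_iff₀ hd0pos]
    nlinarith [hdlow y]
  have hsep := abs_sum_bilin_div_gap_le I Iᶜ hEnonneg ψ (fun k j => lam k - lam j) hΔ
    (fun k hk j hj => hgap k hk j (Finset.mem_compl.mp hj)) x
  have hbound : ∑ y, ∑ z, E y z / Δ *
        ((∑ k ∈ I, |ψ k z| * |ψ k x|) * ∑ j ∈ Iᶜ, |ψ j y| * |ψ j x|)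
      ≤ ∑ y, ∑ z, E y z / Δ * (Sbar * (1 / d0low)) := by
    refine Finset.sum_le_sum fun y _ => Finset.sum_le_sum fun z _ => ?_
    refine mul_le_mul_of_nonneg_left ?_ (div_nonneg (hEnonneg y z) hΔ.le)
    exact mul_le_mul (sum_abs_mul_abs_le_of_sum_sq_le I _ _ (hS z) (hS x))
      (sum_abs_mul_abs_le_of_sum_sq_le Iᶜ _ _ (hcompl y) (hcompl x))
      (Finset.sum_nonneg fun j _ => by positivity) hSbar_nonneg
  have htotal : ∑ y, ∑ z, E y z = 2 * Cconn := by
    rw [hCconn]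
    exact sum_entries_eq_two_mul_sum_cross hdisj hunion hEsymm hEcross
  simp only [← Finset.sum_mul, ← Finset.sum_div, htotal] at hbound
  rw [abs_mul, abs_two]
  calc _ ≤ 2 * (2 * Cconn / Δ * (Sbar * (1 / d0low))) := by
        gcongr
        exact hsep.trans hbound
    _ = _ := by ring
end

section
/- (Separation at t=1 by the spectral embedding norm) Suppose for each k = 1,…,n there are differentiable functions λ_k : [0,1] → ℝ and ψ_k : [0,1] → ℝ^V with W(t)ψ_k(t) = λ_k(t)D(t)ψ_k(t), ψ_k(t)ᵀD(t)ψ_j(t) = δ_{kj}, and |λ_k(t)| ≤ 1 for all t∈[0,1]; let I ⊆ {1,…,n} and S(x,t) = Σ_{k∈I} ψ_k(t)(x)². Assume: (A1) at t=0, I contains exactly K eigenvectors supported on C, each associated with a unique cluster C_j (each of size δn/K) and satisfying (1−ε1)/ν(C_j,0) ≤ ψ(x)² ≤ (1+ε1)/ν(C_j,0) for x∈C_j and ψ(x)² ≤ ε1/ν(C,0) for x∈C∖C_j (0 ≤ ε1 < 1), and |I|−K eigenvectors supported on B with ψ(x)² ≤ (1+ε2)/ν(B,0) for x∈B (ε2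 ≥ 0); (A2) (#) := d0_low(1−ε1)/d0_up − (δ/(1−δ))·((|I|−K)/K)·(1+ε2) > 0; (i) Δ(0) := min_{i∈I,j∉I}|λ_i(0)−λ_j(0)| ≥ 2Δ for some Δ > 0; (ii) C_conn/d0_low ≤ (Δ/8)·(1/(1+Δ/4))·log(1 + (1/2)·(#)/(1+2ε1)); and that for t∈(0,1) the evolution equation ∂S/∂t(x,t) = − Σ_{k,j∈I}(ψ_jᵀD'(t)ψ_k)ψ_k(x)ψ_j(x) + 2Σ_{k∈I,j∉I}[ψ_jᵀ(E−λ_k D'(t))ψ_k/(λ_k−λ_j)]ψ_k(x)ψ_j(x) holds, D'(t) being the diagonal matrix with entries Σ_y E(x,y). Then there exists a constant τ such that at t=1, S(x,1) > τ for every x∈C and S(x,1) < τ for every x∈B. -/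
open Finset

/-- Grönwall estimate for the increment of `f` over `[0, 1]`, with the derivative bound required
only on the open interval. -/
lemma norm_sub_le_of_norm_deriv_le_mul_norm {F : Type*} [NormedAddCommGroup F] [NormedSpace ℝ F]
    {f f' : ℝ → F} {c : ℝ} (hc : 0 ≤ c) (hcont : ContinuousOn f (Set.Icc 0 1))
    (hderiv : ∀ t ∈ Set.Ioo (0 : ℝ) 1, HasDerivAt f (f' t) t)
    (hbound : ∀ t ∈ Set.Ioo (0 : ℝ) 1, ‖f' t‖ ≤ c * ‖f t‖) :
    ‖f 1 - f 0‖ ≤ ‖f 0‖ * (Real.exp c - 1) := by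
  have key : ∀ η ∈ Set.Ioo (0 : ℝ) 1, ‖f 1 - f 0‖ ≤
      ‖f η - f 0‖ * Real.exp (c * (1 - η)) + ‖f 0‖ * (Real.exp (c * (1 - η)) - 1) := by
    intro η hη
    have h := norm_le_gronwallBound_of_norm_deriv_right_le (f := fun t => f t - f 0) (f' := f')
      (δ := ‖f η - f 0‖) (K := c) (ε := c * ‖f 0‖) (a := η) (b := 1)
      ((hcont.mono (Set.Icc_subset_Icc_left hη.1.le)).sub continuousOn_const)
      (fun t ht => ((hderiv t ⟨hη.1.trans_le ht.1, ht.2⟩).sub_const _).hasDerivWithinAt)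
      le_rfl
      (fun t ht => by
        have h1 := hbound t ⟨hη.1.trans_le ht.1, ht.2⟩
        have h2 : ‖f t‖ ≤ ‖f t - f 0‖ + ‖f 0‖ := by
          simpa using norm_add_le (f t - f 0) (f 0)
        nlinarith [mul_le_mul_of_nonneg_left h2 hc])
      1 ⟨hη.2.le, le_rfl⟩
    rcases hc.eq_or_lt with rfl | hc
    · simpa [gronwallBound_K0] using h
    · rwa [gronwallBound_of_K_ne_0 hc.ne', mul_div_cancel_left₀ _ hc.ne'] at h
  have hlim : Filter.Tendsto (fun η => ‖f η - f 0‖ * Real.exp (c * (1 - η))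
      + ‖f 0‖ * (Real.exp (c * (1 - η)) - 1)) (nhdsWithin 0 (Set.Ioo 0 1))
      (nhds (‖f 0 - f 0‖ * Real.exp (c * (1 - 0)) + ‖f 0‖ * (Real.exp (c * (1 - 0)) - 1))) := by
    have hf : Filter.Tendsto f (nhdsWithin 0 (Set.Ioo 0 1)) (nhds (f 0)) :=
      ((hcont 0 (by simp)).mono Set.Ioo_subset_Icc_self).tendsto
    have he : Filter.Tendsto (fun η : ℝ => Real.exp (c * (1 - η)))
        (nhdsWithin 0 (Set.Ioo 0 1)) (nhds (Real.exp (c * (1 - 0)))) :=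
      (Continuous.tendsto (by fun_prop) 0).mono_left nhdsWithin_le_nhds
    exact ((hf.sub_const _).norm.mul he).add ((he.sub_const 1).const_mul _)
  have : (nhdsWithin (0 : ℝ) (Set.Ioo 0 1)).NeBot := by
    rw [nhdsWithin_Ioo_eq_nhdsGT one_pos]; infer_instance
  have := ge_of_tendsto hlim (Filter.eventually_of_mem self_mem_nhdsWithin key)
  simpa using this

/-- Rows orthonormal for the weights `d` form a complete system. -/
lemma mul_sum_sq_eq_one_of_orthonormal {V : Type*} [Fintype V] [DecidableEq V] {d : V → ℝ}
    {φ : V → V → ℝ} (h : ∀ k l, ∑ x, φ k x * d x * φ l x = if k = l then 1 else 0) (x : V) :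
    d x * ∑ k, φ k x ^ 2 = 1 := by
  have h1 : (Matrix.of φ) * (Matrix.diagonal d * (Matrix.of φ).transpose) = 1 := by
    ext k l
    rw [Matrix.mul_apply, Matrix.one_apply, ← h k l]
    simp [Matrix.diagonal_mul, mul_assoc]
  rw [mul_eq_one_comm] at h1
  have h2 := congrFun (congrFun h1 x) x
  rw [Matrix.mul_apply, Matrix.one_apply_eq] at h2
  rw [← h2, Finset.mul_sum]
  refine Finset.sum_congr rfl fun k _ => ?_
  simp [Matrix.diagonal_mul]
  ring

lemma abs_mul_le_sq_add_sq_div_two (a b : ℝ) : |a| * |b| ≤ (a ^ 2 + b ^ 2) / 2 := by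
  nlinarith [sq_nonneg (|a| - |b|), sq_abs a, sq_abs b]

lemma sum_abs_mul_abs_le {ι : Type*} {s : Finset ι} {a b : ι → ℝ} {r : ℝ}
    (ha : ∑ i ∈ s, a i ^ 2 ≤ r) (hb : ∑ i ∈ s, b i ^ 2 ≤ r) :
    ∑ i ∈ s, |a i| * |b i| ≤ r := by
  have h := Finset.sum_le_sum fun i (_ : i ∈ s) => abs_mul_le_sq_add_sq_div_two (a i) (b i)
  rw [← Finset.sum_div, Finset.sum_add_distrib] at h
  linarith

/-- Bound for the rate of change of a symmetric generalized eigenvalue. -/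
lemma abs_quadForm_sub_mul_le {V : Type*} [Fintype V] {E : V → V → ℝ}
    (hE : ∀ x y, 0 ≤ E x y) {v : V → ℝ} {r l : ℝ} (hv : ∀ x, v x ^ 2 ≤ r) (hl : |l| ≤ 1) :
    |(∑ y, ∑ z, v y * E y z * v z) - l * ∑ y, v y * (∑ z, E y z) * v y|
      ≤ 2 * ((∑ y, ∑ z, E y z) * r) := by
  have h1 : |∑ y, ∑ z, v y * E y z * v z| ≤ (∑ y, ∑ z, E y z) * r := by
    rw [Finset.sum_mul]
    refine (Finset.abs_sum_le_sum_abs _ _).trans (Finset.sum_le_sum fun y _ => ?_)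
    rw [Finset.sum_mul]
    refine (Finset.abs_sum_le_sum_abs _ _).trans (Finset.sum_le_sum fun z _ => ?_)
    rw [abs_mul, abs_mul, abs_of_nonneg (hE y z)]
    have := abs_mul_le_sq_add_sq_div_two (v y) (v z)
    have h3 : |v y| * |v z| ≤ r := by linarith [hv y, hv z]
    nlinarith [mul_le_mul_of_nonneg_left h3 (hE y z)]
  have h2 : |∑ y, v y * (∑ z, E y z) * v y| ≤ (∑ y, ∑ z, E y z) * r := by
    rw [Finset.sum_mul]
    refine (Finset.abs_sum_le_sum_abs _ _).trans (Finset.sum_le_sum fun y _ => ?_)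
    have h0 : 0 ≤ ∑ z, E y z := Finset.sum_nonneg fun z _ => hE y z
    have : v y * (∑ z, E y z) * v y = (∑ z, E y z) * v y ^ 2 := by ring
    rw [this, abs_of_nonneg (by positivity)]
    exact mul_le_mul_of_nonneg_left (hv y) h0
  have h3 : |l * ∑ y, v y * (∑ z, E y z) * v y| ≤ (∑ y, ∑ z, E y z) * r := by
    rw [abs_mul]
    exact (mul_le_of_le_one_left (abs_nonneg _) hl).trans h2
  linarith [abs_sub (∑ y, ∑ z, v y * E y z * v z) (l * ∑ y, v y * (∑ z, E y z) * v y)]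

/-- Derivative of an eigenvalue along a differentiable symmetric generalized eigenpair. -/
lemma eigenvalue_deriv_eq {V : Type*} [Fintype V] {W0 E : V → V → ℝ}
    (hW0symm : ∀ x y, W0 x y = W0 y x) (hEsymm : ∀ x y, E x y = E y x)
    {l : ℝ → ℝ} {v : ℝ → V → ℝ} {t l' : ℝ} {v' : V → ℝ}
    (hl : HasDerivAt l l' t) (hv : ∀ x, HasDerivAt (fun s => v s x) (v' x) t)
    (heig : ∀ᶠ s in nhds t, ∀ x, ∑ y, (W0 x y + s * E x y) * v s y
      = l s * ((∑ y, (W0 x y + s * E x y)) * v s x))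
    (hnorm : ∑ x, v t x * (∑ y, (W0 x y + t * E x y)) * v t x = 1) :
    l' = (∑ y, ∑ z, v t y * E y z * v t z) - l t * ∑ y, v t y * (∑ z, E y z) * v t y := by
  have hW : ∀ x y, HasDerivAt (fun s => W0 x y + s * E x y) (E x y) t := fun x y => by
    simpa using ((hasDerivAt_id t).mul_const (E x y)).const_add (W0 x y)
  have hx : ∀ x, ∑ y, (E x y * v t y + (W0 x y + t * E x y) * v' y)
      = l' * ((∑ y, (W0 x y + t * E x y)) * v t x)
        + l t * ((∑ y, E x y) * v t x + (∑ y, (W0 x y + t * E x y)) * v' x) := by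
    intro x
    have hL : HasDerivAt (fun s => ∑ y, (W0 x y + s * E x y) * v s y) _ t :=
      HasDerivAt.fun_sum fun y _ => (hW x y).mul (hv y)
    have hR : HasDerivAt (fun s => l s * ((∑ y, (W0 x y + s * E x y)) * v s x)) _ t :=
      hl.mul ((HasDerivAt.fun_sum fun y _ => hW x y).mul (hv x))
    exact hL.unique (hR.congr_of_eventuallyEq (heig.mono fun s hs => hs x))
  have hsum : ∑ x, v t x * ∑ y, (E x y * v t y + (W0 x y + t * E x y) * v' y)
      = l' * (∑ x, v t x * (∑ y, (W0 x y + t * E x y)) * v t x)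
        + l t * (∑ x, v t x * (∑ y, E x y) * v t x)
        + ∑ x, v' x * (l t * ((∑ y, (W0 x y + t * E x y)) * v t x)) := by
    rw [Finset.mul_sum, Finset.mul_sum, ← Finset.sum_add_distrib, ← Finset.sum_add_distrib]
    refine Finset.sum_congr rfl fun x _ => ?_
    rw [hx x]; ring
  have hself : ∑ x, v t x * ∑ y, (W0 x y + t * E x y) * v' y
      = ∑ x, v' x * (l t * ((∑ y, (W0 x y + t * E x y)) * v t x)) := by
    simp_rw [← heig.self_of_nhds, Finset.mul_sum]
    rw [Finset.sum_comm]
    refine Finset.sum_congr rfl fun y _ => Finset.sum_congr rfl fun x _ => ?_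
    rw [hW0symm x y, hEsymm x y]; ring
  have hE : ∑ x, v t x * ∑ y, E x y * v t y = ∑ y, ∑ z, v t y * E y z * v t z := by
    simp_rw [Finset.mul_sum, mul_assoc]
  have hsplit : ∑ x, v t x * ∑ y, (E x y * v t y + (W0 x y + t * E x y) * v' y)
      = (∑ x, v t x * ∑ y, E x y * v t y) + ∑ x, v t x * ∑ y, (W0 x y + t * E x y) * v' y := by
    rw [← Finset.sum_add_distrib]
    refine Finset.sum_congr rfl fun x _ => ?_
    rw [Finset.sum_add_distrib, mul_add]
  rw [hsplit, hself, hE, hnorm] at hsum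
  linarith

/-- Bound for the right-hand side of the evolution equation of the embedding norm. -/
lemma abs_evolution_le {V : Type*} [Fintype V] [DecidableEq V] {E : V → V → ℝ}
    (hE : ∀ x y, 0 ≤ E x y) {φ : V → V → ℝ} {l : V → ℝ} (hl : ∀ k, |l k| ≤ 1)
    {I : Finset V} {g r M : ℝ} (hg : 0 < g) (hr : ∀ x, ∑ k, φ k x ^ 2 ≤ r)
    (hM : ∀ x, ∑ k ∈ I, φ k x ^ 2 ≤ M)
    (hgap : ∀ i ∈ I, ∀ j ∉ I, g ≤ |l i - l j|) (x : V) :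
    |-(∑ k ∈ I, ∑ j ∈ I, (∑ y, φ j y * (∑ z, E y z) * φ k y) * φ k x * φ j x)
          + 2 * ∑ k ∈ I, ∑ j ∈ Iᶜ,
              (((∑ y, ∑ z, φ j y * E y z * φ k z)
                  - l k * (∑ y, φ j y * (∑ z, E y z) * φ k y))
                / (l k - l j)) * φ k x * φ j x|
      ≤ ((∑ y, ∑ z, E y z) * r * (1 + 4 / g)) * M := by
  have hsub : ∀ (s : Finset V) y, ∑ k ∈ s, φ k y ^ 2 ≤ r := fun s y =>
    (Finset.sum_le_sum_of_subset_of_nonneg (Finset.subset_univ s)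
      fun _ _ _ => sq_nonneg _).trans (hr y)
  have hr0 : 0 ≤ r := (Finset.sum_nonneg fun k _ => sq_nonneg (φ k x)).trans (hr x)
  have hM0 : 0 ≤ M := (Finset.sum_nonneg fun k _ => sq_nonneg (φ k x)).trans (hM x)
  have h1 : ∑ k ∈ I, ∑ j ∈ I, (∑ y, φ j y * (∑ z, E y z) * φ k y) * φ k x * φ j x
      = ∑ y, (∑ z, E y z) * (∑ k ∈ I, φ k y * φ k x) ^ 2 := by
    have hy : ∀ y, (∑ z, E y z) * (∑ k ∈ I, φ k y * φ k x) ^ 2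
        = ∑ k ∈ I, ∑ j ∈ I, φ j y * (∑ z, E y z) * φ k y * φ k x * φ j x := by
      intro y
      rw [sq, Finset.sum_mul_sum, Finset.mul_sum]
      refine Finset.sum_congr rfl fun k _ => ?_
      rw [Finset.mul_sum]
      refine Finset.sum_congr rfl fun j _ => ?_
      ring
    rw [Finset.sum_congr rfl fun y _ => hy y]
    symm
    rw [Finset.sum_comm]
    refine Finset.sum_congr rfl fun k _ => ?_
    rw [Finset.sum_comm]
    refine Finset.sum_congr rfl fun j _ => ?_
    rw [Finset.sum_mul, Finset.sum_mul]
  have h2 : |∑ y, (∑ z, E y z) * (∑ k ∈ I, φ k y * φ k x) ^ 2|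
      ≤ (∑ y, ∑ z, E y z) * (r * M) := by
    rw [Finset.sum_mul]
    refine (Finset.abs_sum_le_sum_abs _ _).trans (Finset.sum_le_sum fun y _ => ?_)
    have h0 : 0 ≤ ∑ z, E y z := Finset.sum_nonneg fun z _ => hE y z
    rw [abs_of_nonneg (by positivity)]
    refine mul_le_mul_of_nonneg_left ?_ h0
    have hG : ∀ b, (∀ w, ∑ k ∈ I, φ k w ^ 2 ≤ b) → |∑ k ∈ I, φ k y * φ k x| ≤ b := by
      intro b hb
      refine (Finset.abs_sum_le_sum_abs _ _).trans ?_
      simp_rw [abs_mul]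
      exact sum_abs_mul_abs_le (hb y) (hb x)
    rw [← sq_abs, sq]
    exact mul_le_mul (hG r (hsub I)) (hG M hM) (abs_nonneg _) hr0
  have h3 : ∑ k ∈ I, ∑ j ∈ Iᶜ, (((∑ y, ∑ z, φ j y * E y z * φ k z)
                  - l k * (∑ y, φ j y * (∑ z, E y z) * φ k y))
                / (l k - l j)) * φ k x * φ j x
      = ∑ y, ∑ z, E y z * ∑ k ∈ I, φ k x * (φ k z - l k * φ k y)
          * ∑ j ∈ Iᶜ, φ j x * φ j y / (l k - l j) := by
    have hterm : ∀ k j, (((∑ y, ∑ z, φ j y * E y z * φ k z)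
                  - l k * (∑ y, φ j y * (∑ z, E y z) * φ k y))
                / (l k - l j)) * φ k x * φ j x
        = ∑ y, ∑ z, E y z * (φ k x * (φ k z - l k * φ k y)
          * (φ j x * φ j y / (l k - l j))) := by
      intro k j
      have : (∑ y, ∑ z, φ j y * E y z * φ k z) - l k * (∑ y, φ j y * (∑ z, E y z) * φ k y)
          = ∑ y, ∑ z, E y z * φ j y * (φ k z - l k * φ k y) := by
        rw [Finset.mul_sum, ← Finset.sum_sub_distrib]
        refine Finset.sum_congr rfl fun y _ => ?_
        rw [Finset.mul_sum, Finset.sum_mul, Finset.mul_sum, ← Finset.sum_sub_distrib]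
        refine Finset.sum_congr rfl fun z _ => ?_
        ring
      rw [this]
      simp_rw [Finset.sum_div, Finset.sum_mul]
      refine Finset.sum_congr rfl fun y _ => Finset.sum_congr rfl fun z _ => ?_
      ring
    simp_rw [hterm, Finset.mul_sum]
    have hswap : ∀ F : V → V → V → V → ℝ, ∑ k ∈ I, ∑ j ∈ Iᶜ, ∑ y, ∑ z, F k j y z
        = ∑ y, ∑ z, ∑ k ∈ I, ∑ j ∈ Iᶜ, F k j y z := by
      intro F
      calc _ = ∑ k ∈ I, ∑ y, ∑ z, ∑ j ∈ Iᶜ, F k j y z := by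
            refine Finset.sum_congr rfl fun k _ => ?_
            rw [Finset.sum_comm]
            exact Finset.sum_congr rfl fun y _ => Finset.sum_comm
        _ = _ := by
            rw [Finset.sum_comm]
            exact Finset.sum_congr rfl fun y _ => Finset.sum_comm
    exact hswap _
  have h4 : |∑ y, ∑ z, E y z * ∑ k ∈ I, φ k x * (φ k z - l k * φ k y)
          * ∑ j ∈ Iᶜ, φ j x * φ j y / (l k - l j)| ≤ (∑ y, ∑ z, E y z) * (2 * M * (r / g)) := by
    rw [Finset.sum_mul]
    refine (Finset.abs_sum_le_sum_abs _ _).trans (Finset.sum_le_sum fun y _ => ?_)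
    rw [Finset.sum_mul]
    refine (Finset.abs_sum_le_sum_abs _ _).trans (Finset.sum_le_sum fun z _ => ?_)
    rw [abs_mul, abs_of_nonneg (hE y z)]
    refine mul_le_mul_of_nonneg_left ?_ (hE y z)
    refine (Finset.abs_sum_le_sum_abs _ _).trans ?_
    have hH : ∀ k ∈ I, |∑ j ∈ Iᶜ, φ j x * φ j y / (l k - l j)| ≤ r / g := by
      intro k hk
      refine (Finset.abs_sum_le_sum_abs _ _).trans ?_
      have : ∀ j ∈ Iᶜ, |φ j x * φ j y / (l k - l j)| ≤ |φ j x| * |φ j y| / g := by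
        intro j hj
        rw [abs_div, abs_mul]
        exact div_le_div_of_nonneg_left (by positivity) hg
          (hgap k hk j (Finset.mem_compl.mp hj))
      refine (Finset.sum_le_sum this).trans ?_
      rw [← Finset.sum_div]
      exact div_le_div_of_nonneg_right (sum_abs_mul_abs_le (hsub _ x) (hsub _ y)) hg.le
    have hterm : ∀ k ∈ I, |φ k x * (φ k z - l k * φ k y)
          * ∑ j ∈ Iᶜ, φ j x * φ j y / (l k - l j)|
        ≤ (|φ k x| * |φ k z| + |φ k x| * |φ k y|) * (r / g) := by
      intro k hk
      rw [abs_mul, abs_mul, ← mul_add]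
      have hk' : |φ k z - l k * φ k y| ≤ |φ k z| + |φ k y| := by
        refine (abs_sub _ _).trans ?_
        rw [abs_mul]
        linarith [mul_le_of_le_one_left (abs_nonneg (φ k y)) (hl k)]
      exact mul_le_mul (mul_le_mul_of_nonneg_left hk' (abs_nonneg _)) (hH k hk)
        (abs_nonneg _) (by positivity)
    refine (Finset.sum_le_sum hterm).trans ?_
    rw [← Finset.sum_mul, Finset.sum_add_distrib]
    refine mul_le_mul_of_nonneg_right ?_ (by positivity)
    linarith [sum_abs_mul_abs_le (hM x) (hM z), sum_abs_mul_abs_le (hM x) (hM y)]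
  rw [h1, h3]
  refine (abs_add_le _ _).trans ?_
  rw [abs_neg, abs_mul, abs_two]
  have : (∑ y, ∑ z, E y z) * r * (1 + 4 / g) * M
      = (∑ y, ∑ z, E y z) * (r * M) + 2 * ((∑ y, ∑ z, E y z) * (2 * M * (r / g))) := by ring
  linarith

/-- The total mass of a symmetric matrix supported on cross entries is twice its cut weight. -/
lemma sum_sum_eq_two_mul_cross {V : Type*} [Fintype V] [DecidableEq V] {B C : Finset V}
    (hdisj : Disjoint B C) (hunion : B ∪ C = Finset.univ) {E : V → V → ℝ}
    (hEsymm : ∀ x y, E x y = E y x)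
    (hEcross : ∀ x y, ¬((x ∈ B ∧ y ∈ C) ∨ (x ∈ C ∧ y ∈ B)) → E x y = 0) :
    ∑ x, ∑ y, E x y = 2 * ∑ x ∈ B, ∑ y ∈ C, E x y := by
  have hBC : ∀ x ∈ B, x ∉ C := fun x hx hx' => Finset.disjoint_left.mp hdisj hx hx'
  have hB : ∀ x ∈ B, ∑ y, E x y = ∑ y ∈ C, E x y := fun x hx =>
    (Finset.sum_subset (Finset.subset_univ C) fun y _ hy =>
      hEcross x y (by rintro (h | h); exacts [hy h.2, hBC x hx h.1])).symm
  have hC : ∀ x ∈ C, ∑ y, E x y = ∑ y ∈ B, E x y := fun x hx =>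
    (Finset.sum_subset (Finset.subset_univ B) fun y _ hy =>
      hEcross x y (by rintro (h | h); exacts [hBC x h.1 hx, hy h.2])).symm
  rw [← hunion, Finset.sum_union hdisj, hunion, Finset.sum_congr rfl hB, Finset.sum_congr rfl hC,
    Finset.sum_comm (s := C), two_mul]
  simp_rw [fun x y => hEsymm y x]

/-- An eigenvalue of a pencil `(W0 + tE, D(t))` moves at bounded speed on `[0, 1]`. -/
lemma abs_eigenvalue_sub_le {V : Type*} [Fintype V] {W0 E : V → V → ℝ}
    (hW0symm : ∀ x y, W0 x y = W0 y x) (hEsymm : ∀ x y, E x y = E y x) (hE : ∀ x y, 0 ≤ E x y)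
    {l : ℝ → ℝ} {v : ℝ → V → ℝ} {r : ℝ}
    (hl : DifferentiableOn ℝ l (Set.Icc (0 : ℝ) 1))
    (hv : ∀ x, DifferentiableOn ℝ (fun s => v s x) (Set.Icc (0 : ℝ) 1))
    (heig : ∀ t ∈ Set.Icc (0 : ℝ) 1, ∀ x, ∑ y, (W0 x y + t * E x y) * v t y
      = l t * ((∑ y, (W0 x y + t * E x y)) * v t x))
    (hnorm : ∀ t ∈ Set.Icc (0 : ℝ) 1, ∑ x, v t x * (∑ y, (W0 x y + t * E x y)) * v t x = 1)
    (hbound : ∀ t ∈ Set.Icc (0 : ℝ) 1, |l t| ≤ 1)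
    (hr : ∀ t ∈ Set.Icc (0 : ℝ) 1, ∀ x, v t x ^ 2 ≤ r) :
    ∀ t ∈ Set.Icc (0 : ℝ) 1, |l t - l 0| ≤ 2 * ((∑ y, ∑ z, E y z) * r) := by
  intro t ht
  rcases ht.1.eq_or_lt with rfl | ht0
  · simpa using (abs_nonneg _).trans
      (abs_quadForm_sub_mul_le hE (hr 0 ht) (hbound 0 ht))
  have hd : ∀ s ∈ Set.Ioo (0 : ℝ) t, Set.Icc (0 : ℝ) 1 ∈ nhds s := fun s hs =>
    Icc_mem_nhds hs.1 (hs.2.trans_le ht.2)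
  obtain ⟨s, hs, hs'⟩ := exists_deriv_eq_slope l ht0
    (hl.continuousOn.mono (Set.Icc_subset_Icc_right ht.2))
    (fun s hs => ((hl.differentiableAt (hd s hs))).differentiableWithinAt)
  have hsI : s ∈ Set.Icc (0 : ℝ) 1 := mem_of_mem_nhds (hd s hs)
  have hder := eigenvalue_deriv_eq hW0symm hEsymm (hl.differentiableAt (hd s hs)).hasDerivAt
    (fun x => ((hv x).differentiableAt (hd s hs)).hasDerivAt)
    (Filter.eventually_of_mem (hd s hs) heig) (hnorm s hsI)
  have hb := abs_quadForm_sub_mul_le hE (hr s hsI) (hbound s hsI)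
  rw [← hder, hs', sub_zero, abs_div, abs_of_pos ht0, div_le_iff₀ ht0] at hb
  have h0 := (abs_nonneg _).trans
      (abs_quadForm_sub_mul_le hE (hr s hsI) (hbound s hsI))
  exact hb.trans (mul_le_of_le_one_right h0 ht.2)

lemma sum_eq_sum_comp_add_sum_sdiff {ι V : Type*} [Fintype ι] [DecidableEq V] {I : Finset V}
    {σ : ι → V} (hσ : Function.Injective σ) (hσI : ∀ j, σ j ∈ I) (f : V → ℝ) :
    ∑ k ∈ I, f k = ∑ j, f (σ j) + ∑ k ∈ I \ Finset.univ.image σ, f k := by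
  rw [← Finset.sum_image (s := Finset.univ) (g := σ) (f := f) fun a _ b _ h => hσ h, add_comm,
    Finset.sum_sdiff]
  simpa [Finset.subset_iff] using hσI

lemma card_sdiff_image {ι V : Type*} [Fintype ι] [DecidableEq V] {I : Finset V}
    {σ : ι → V} (hσ : Function.Injective σ) (hσI : ∀ j, σ j ∈ I) :
    ((I \ Finset.univ.image σ).card : ℝ) = I.card - Fintype.card ι := by
  have h := sum_eq_sum_comp_add_sum_sdiff hσ hσI fun _ => (1 : ℝ)
  simp only [Finset.sum_const, nsmul_eq_mul, mul_one, Finset.card_univ] at h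
  linarith

set_option maxHeartbeats 1000000 in
/-- Separation at `t = 1` by the spectral embedding norm: under
Assumption A1 at `t = 0`, Assumption A2 (`(#) > 0`), an initial `I`-eigen-gap
`Δ(0) ≥ 2Δ`, the smallness condition (ii) on the cluster-background connection
`C_conn`, and the evolution equation for `S(x,t) = ∑_{k∈I} ψ_k(t)(x)²` on `(0,1)`,
there is a threshold `τ` with `S(x,1) > τ` on `C` and `S(x,1) < τ` on `B`. -/
theorem embedding_norm_separation_at_one
    {V : Type*} [Fintype V] [DecidableEq V] [Nonempty V]
    (B C : Finset V) (hdisj : Disjoint B C) (hunion : B ∪ C = Finset.univ)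
    (hBne : B.Nonempty) (hCne : C.Nonempty)
    (K : ℕ) (hK : 0 < K) (Cl : Fin K → Finset V)
    (hClsub : ∀ j, Cl j ⊆ C)
    (hCldisj : ∀ j j', j ≠ j' → Disjoint (Cl j) (Cl j'))
    (hClcover : ∀ x ∈ C, ∃ j, x ∈ Cl j)
    (δ : ℝ) (hδ0 : 0 < δ) (hδ1 : δ < 1)
    (hCcard : (C.card : ℝ) = δ * Fintype.card V)
    (hClcard : ∀ j, ((Cl j).card : ℝ) = δ * Fintype.card V / K)
    (W0 E : Matrix V V ℝ)
    (hW0symm : W0.IsSymm) (hW0nonneg : ∀ x y, 0 ≤ W0 x y)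
    (hW0cross : ∀ x y, ((x ∈ B ∧ y ∈ C) ∨ (x ∈ C ∧ y ∈ B)) → W0 x y = 0)
    (hEsymm : E.IsSymm) (hEnonneg : ∀ x y, 0 ≤ E x y)
    (hEcross : ∀ x y, ¬((x ∈ B ∧ y ∈ C) ∨ (x ∈ C ∧ y ∈ B)) → E x y = 0)
    (Cconn : ℝ) (hCconn : Cconn = ∑ x ∈ B, ∑ y ∈ C, E x y)
    (d0low d0up : ℝ)
    (hd0low : d0low = Finset.univ.inf' Finset.univ_nonempty (fun x => ∑ y, W0 x y))
    (hd0up : d0up = Finset.univ.sup' Finset.univ_nonempty (fun x => ∑ y, W0 x y))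
    (hd0pos : 0 < d0low)
    -- differentiable D(t)-orthonormal eigenpairs of P(t) = D(t)⁻¹W(t), indexed by k : V
    (lam : V → ℝ → ℝ) (ψ : V → ℝ → V → ℝ)
    (hlamdiff : ∀ k, DifferentiableOn ℝ (lam k) (Set.Icc (0 : ℝ) 1))
    (hψdiff : ∀ k x, DifferentiableOn ℝ (fun s => ψ k s x) (Set.Icc (0 : ℝ) 1))
    (heig : ∀ k, ∀ t ∈ Set.Icc (0 : ℝ) 1, ∀ x,
      ∑ y, (W0 x y + t * E x y) * ψ k t y
        = lam k t * ((∑ y, (W0 x y + t * E x y)) * ψ k t x))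
    (horth : ∀ t ∈ Set.Icc (0 : ℝ) 1, ∀ k l,
      ∑ x, ψ k t x * (∑ y, (W0 x y + t * E x y)) * ψ l t x = if k = l then 1 else 0)
    (hlambound : ∀ k, ∀ t ∈ Set.Icc (0 : ℝ) 1, |lam k t| ≤ 1)
    (I : Finset V)
    (ε1 ε2 : ℝ) (hε1 : 0 ≤ ε1) (hε1' : ε1 < 1) (hε2 : 0 ≤ ε2)
    -- Assumption A1 at t = 0: K eigenvectors in I supported on C, one per cluster
    (σ : Fin K → V) (hσinj : Function.Injective σ)
    (hσI : ∀ j, σ j ∈ I)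
    (hCsupp : ∀ j, ∀ x ∈ B, ψ (σ j) 0 x = 0)
    (hBsupp : ∀ k ∈ I, k ∉ Finset.univ.image σ → ∀ x ∈ C, ψ k 0 x = 0)
    (hlow : ∀ j, ∀ x ∈ Cl j,
      (1 - ε1) / (∑ y ∈ Cl j, ∑ z, W0 y z) ≤ (ψ (σ j) 0 x) ^ 2)
    (hup : ∀ j, ∀ x ∈ Cl j,
      (ψ (σ j) 0 x) ^ 2 ≤ (1 + ε1) / (∑ y ∈ Cl j, ∑ z, W0 y z))
    (hoff : ∀ j, ∀ x ∈ C, x ∉ Cl j →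
      (ψ (σ j) 0 x) ^ 2 ≤ ε1 / (∑ y ∈ C, ∑ z, W0 y z))
    (hBbound : ∀ k ∈ I, k ∉ Finset.univ.image σ →
      ∀ x ∈ B, (ψ k 0 x) ^ 2 ≤ (1 + ε2) / (∑ y ∈ B, ∑ z, W0 y z))
    -- Assumption A2: (#) > 0
    (hash : ℝ)
    (hhash : hash = d0low * (1 - ε1) / d0up
      - (δ / (1 - δ)) * (((I.card : ℝ) - K) / K) * (1 + ε2))
    (hA2 : 0 < hash)
    -- condition (i): initial I-eigen-gap
    (Δ : ℝ) (hΔ : 0 < Δ)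
    (hgap0 : ∀ i ∈ I, ∀ j ∉ I, 2 * Δ ≤ |lam i 0 - lam j 0|)
    -- condition (ii): smallness of the cluster-background connection
    (hC : Cconn / d0low
      ≤ (Δ / 8) * (1 / (1 + Δ / 4)) * Real.log (1 + (1 / 2) * (hash / (1 + 2 * ε1))))
    -- the evolution equation of S(x,t) on (0,1)
    (hevol : ∀ x, ∀ t ∈ Set.Ioo (0 : ℝ) 1,
      HasDerivAt (fun s => ∑ k ∈ I, (ψ k s x) ^ 2)
        (-(∑ k ∈ I, ∑ j ∈ I, (∑ y, ψ j t y * (∑ z, E y z) * ψ k t y) * ψ k t x * ψ j t x)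
          + 2 * ∑ k ∈ I, ∑ j ∈ Iᶜ,
              (((∑ y, ∑ z, ψ j t y * E y z * ψ k t z)
                  - lam k t * (∑ y, ψ j t y * (∑ z, E y z) * ψ k t y))
                / (lam k t - lam j t)) * ψ k t x * ψ j t x) t) :
    ∃ τ : ℝ,
      (∀ x ∈ C, τ < ∑ k ∈ I, (ψ k 1 x) ^ 2) ∧
      (∀ x ∈ B, ∑ k ∈ I, (ψ k 1 x) ^ 2 < τ) := by
  have hW0s : ∀ x y, W0 x y = W0 y x := fun x y => (hW0symm.apply x y).symm
  have hEs : ∀ x y, E x y = E y x := fun x y => (hEsymm.apply x y).symm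
  have hd0 : ∀ x, d0low ≤ ∑ y, W0 x y := fun x => by
    rw [hd0low]; exact Finset.inf'_le _ (Finset.mem_univ x)
  have hd0_le : ∀ x, ∑ y, W0 x y ≤ d0up := fun x => by
    rw [hd0up]; exact Finset.le_sup' (fun x => ∑ y, W0 x y) (Finset.mem_univ x)
  have hlowup : d0low ≤ d0up := (hd0 (Classical.arbitrary V)).trans (hd0_le _)
  have hup0 : 0 < d0up := hd0pos.trans_le hlowup
  have hT : ∑ y, ∑ z, E y z = 2 * Cconn := by
    rw [hCconn]; exact sum_sum_eq_two_mul_cross hdisj hunion hEs hEcross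
  have hn : (0 : ℝ) < Fintype.card V := by exact_mod_cast Fintype.card_pos
  have hKr : (0 : ℝ) < K := by exact_mod_cast hK
  have hδ1' : 0 < 1 - δ := by linarith
  have hBcard : (B.card : ℝ) = (1 - δ) * Fintype.card V := by
    have := Finset.card_union_of_disjoint hdisj
    rw [hunion, Finset.card_univ] at this
    have : (Fintype.card V : ℝ) = B.card + C.card := by exact_mod_cast this
    linarith
  have hIcard : ((I \ Finset.univ.image σ).card : ℝ) = I.card - K := by
    simpa using card_sdiff_image hσinj hσI
  have hIK : (0 : ℝ) ≤ I.card - K := hIcard ▸ Nat.cast_nonneg _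
  have hνlow : ∀ A : Finset V, A.card * d0low ≤ ∑ y ∈ A, ∑ z, W0 y z := fun A => by
    simpa using Finset.card_nsmul_le_sum A (fun y => ∑ z, W0 y z) d0low fun y _ => hd0 y
  have hνup : ∀ A : Finset V, ∑ y ∈ A, ∑ z, W0 y z ≤ A.card * d0up := fun A => by
    simpa using Finset.sum_le_card_nsmul A (fun y => ∑ z, W0 y z) d0up fun y _ => hd0_le y
  -- the embedding norm at time zero
  set Q : ℝ := K / (δ * Fintype.card V * d0low) with hQ
  have hQ0 : 0 < Q := by positivity
  set b : ℝ := (δ / (1 - δ)) * (((I.card : ℝ) - K) / K) * (1 + ε2) with hb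
  have hb0 : 0 ≤ b := by positivity
  have hratio : d0low * (1 - ε1) / d0up ≤ 1 := by
    rw [div_le_one hup0]
    nlinarith
  have hClpos : 0 < δ * Fintype.card V / K * d0low := by positivity
  have hClow : ∀ x ∈ C, Q * (b + hash) ≤ ∑ k ∈ I, ψ k 0 x ^ 2 := by
    intro x hx
    obtain ⟨j, hj⟩ := hClcover x hx
    have h1 : Q * (b + hash) = (1 - ε1) / (δ * Fintype.card V / K * d0up) := by
      rw [hhash, hQ]; field_simp; ring
    have h2 : 0 < ∑ y ∈ Cl j, ∑ z, W0 y z :=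
      hClpos.trans_le (hClcard j ▸ hνlow (Cl j))
    rw [h1]
    refine le_trans ?_ ((hlow j x hj).trans
      (Finset.single_le_sum (f := fun k => ψ k 0 x ^ 2) (fun _ _ => sq_nonneg _) (hσI j)))
    exact div_le_div_of_nonneg_left (by linarith) h2 (hClcard j ▸ hνup (Cl j))
  have hCup : ∀ x ∈ C, ∑ k ∈ I, ψ k 0 x ^ 2 ≤ Q * (1 + 2 * ε1) := by
    intro x hx
    obtain ⟨j, hj⟩ := hClcover x hx
    rw [sum_eq_sum_comp_add_sum_sdiff hσinj hσI]
    have h0 : ∑ k ∈ I \ Finset.univ.image σ, ψ k 0 x ^ 2 = 0 :=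
      Finset.sum_eq_zero fun k hk => by
        rw [Finset.mem_sdiff] at hk
        rw [hBsupp k hk.1 hk.2 x hx]; norm_num
    have h1 : ψ (σ j) 0 x ^ 2 ≤ (1 + ε1) * Q := by
      refine (hup j x hj).trans ?_
      have : (1 + ε1) * Q = (1 + ε1) / (δ * Fintype.card V / K * d0low) := by
        rw [hQ]; field_simp
      rw [this]
      exact div_le_div_of_nonneg_left (by linarith) hClpos (hClcard j ▸ hνlow (Cl j))
    have h2 : ∀ i ∈ Finset.univ.erase j, ψ (σ i) 0 x ^ 2 ≤ ε1 * Q / K := by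
      intro i hi
      have hxi : x ∉ Cl i :=
        Finset.disjoint_left.mp (hCldisj j i (Finset.ne_of_mem_erase hi).symm) hj
      refine (hoff i x hx hxi).trans ?_
      have : ε1 * Q / K = ε1 / (δ * Fintype.card V * d0low) := by
        rw [hQ]; field_simp
      rw [this]
      exact div_le_div_of_nonneg_left hε1 (by positivity) (hCcard ▸ hνlow C)
    have h3 : ∑ i ∈ Finset.univ.erase j, ψ (σ i) 0 x ^ 2 ≤ ε1 * Q := by
      refine (Finset.sum_le_card_nsmul _ _ _ h2).trans ?_
      rw [nsmul_eq_mul]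
      have hc : ((Finset.univ.erase j).card : ℝ) ≤ K := by
        exact_mod_cast (Finset.card_le_univ _).trans_eq (Fintype.card_fin K)
      calc _ ≤ K * (ε1 * Q / K) := mul_le_mul_of_nonneg_right hc (by positivity)
        _ = ε1 * Q := by field_simp
    rw [h0, ← Finset.add_sum_erase _ _ (Finset.mem_univ j)]
    linarith
  have hBup : ∀ x ∈ B, ∑ k ∈ I, ψ k 0 x ^ 2 ≤ Q * b := by
    intro x hx
    rw [sum_eq_sum_comp_add_sum_sdiff hσinj hσI]
    have h0 : ∑ j, ψ (σ j) 0 x ^ 2 = 0 := Finset.sum_eq_zero fun j _ => by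
      rw [hCsupp j x hx]; norm_num
    rw [h0, zero_add]
    have h1 : ∀ k ∈ I \ Finset.univ.image σ,
        ψ k 0 x ^ 2 ≤ (1 + ε2) / ((1 - δ) * Fintype.card V * d0low) := by
      intro k hk
      rw [Finset.mem_sdiff] at hk
      exact (hBbound k hk.1 hk.2 x hx).trans (div_le_div_of_nonneg_left (by linarith)
        (by positivity) (hBcard ▸ hνlow B))
    refine (Finset.sum_le_card_nsmul _ _ _ h1).trans_eq ?_
    rw [nsmul_eq_mul, hIcard, hQ, hb]
    field_simp
  have hS0 : ∀ x, ∑ k ∈ I, ψ k 0 x ^ 2 ≤ Q * (1 + 2 * ε1) := by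
    intro x
    have hx : x ∈ B ∪ C := hunion ▸ Finset.mem_univ x
    rcases Finset.mem_union.mp hx with hx | hx
    · refine (hBup x hx).trans (mul_le_mul_of_nonneg_left ?_ hQ0.le)
      linarith
    · exact hCup x hx
  -- consequences of the smallness condition
  set u : ℝ := 1 / 2 * (hash / (1 + 2 * ε1)) with hu
  have hu0 : 0 < u := by positivity
  have hu1 : u ≤ 1 / 2 := by
    have : hash / (1 + 2 * ε1) ≤ 1 := by
      rw [div_le_one (by positivity)]; linarith
    linarith
  set α : ℝ := Cconn / d0low with hα
  have hα0 : 0 ≤ α := div_nonneg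
    (hCconn ▸ Finset.sum_nonneg fun x _ => Finset.sum_nonneg fun y _ => hEnonneg x y) hd0pos.le
  have hTr : (∑ y, ∑ z, E y z) * (1 / d0low) = 2 * α := by rw [hT, hα]; ring
  have hlog : α * (8 / Δ + 2) ≤ Real.log (1 + u) := by
    have : Δ / 8 * (1 / (1 + Δ / 4)) * Real.log (1 + u) * (8 / Δ + 2) = Real.log (1 + u) := by
      field_simp; ring
    rw [← this]
    exact mul_le_mul_of_nonneg_right hC (by positivity)
  have hlogu : Real.log (1 + u) ≤ u := by
    linarith [Real.log_le_sub_one_of_pos (show 0 < 1 + u by linarith)]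
  have hαΔ : 16 * α ≤ Δ := by
    have h1 : α * (8 / Δ) ≤ 1 / 2 := by nlinarith
    have h2 : α * (8 / Δ) * Δ = 8 * α := by field_simp
    nlinarith
  set c : ℝ := 2 * α * (1 + 4 / (3 / 2 * Δ)) with hc
  have hc0 : 0 ≤ c := by positivity
  have hexp : Real.exp c - 1 < u := by
    have hlt : c < Real.log (1 + u) := by
      rcases hα0.eq_or_lt with h | h
      · rw [hc, ← h]; simpa using Real.log_pos (by linarith : 1 < 1 + u)
      · refine lt_of_lt_of_le ?_ hlog
        have h1 : α * (8 / Δ + 2) - c = 8 / 3 * (α / Δ) := by rw [hc]; field_simp; ring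
        have h2 : 0 < α / Δ := by positivity
        linarith
    have := (Real.lt_log_iff_exp_lt (by linarith)).mp hlt
    linarith
  -- completeness and the eigengap at all times
  have hr : ∀ t ∈ Set.Icc (0 : ℝ) 1, ∀ x, ∑ k, ψ k t x ^ 2 ≤ 1 / d0low := by
    intro t ht x
    have h1 := mul_sum_sq_eq_one_of_orthonormal (horth t ht) x
    have h2 : d0low ≤ ∑ y, (W0 x y + t * E x y) := (hd0 x).trans
      (Finset.sum_le_sum fun y _ => le_add_of_nonneg_right (mul_nonneg ht.1 (hEnonneg x y)))
    rw [le_div_iff₀ hd0pos, mul_comm, ← h1]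
    exact mul_le_mul_of_nonneg_right h2 (Finset.sum_nonneg fun k _ => sq_nonneg _)
  have hlam : ∀ k, ∀ t ∈ Set.Icc (0 : ℝ) 1, |lam k t - lam k 0| ≤ 4 * α := by
    intro k t ht
    have := abs_eigenvalue_sub_le hW0s hEs hEnonneg (hlamdiff k) (hψdiff k) (heig k)
      (fun t ht => (horth t ht k k).trans (if_pos rfl)) (hlambound k)
      (fun t ht x => (Finset.single_le_sum (f := fun k => ψ k t x ^ 2)
        (fun _ _ => sq_nonneg _) (Finset.mem_univ k)).trans (hr t ht x)) t ht
    rw [hTr] at this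
    linarith
  have hgap : ∀ t ∈ Set.Icc (0 : ℝ) 1, ∀ i ∈ I, ∀ j ∉ I,
      3 / 2 * Δ ≤ |lam i t - lam j t| := by
    intro t ht i hi j hj
    have h1 := hgap0 i hi j hj
    have h2 : |lam i 0 - lam j 0|
        ≤ |lam i t - lam j t| + (|lam i t - lam i 0| + |lam j t - lam j 0|) := by
      have : lam i 0 - lam j 0 = (lam i t - lam j t)
          - ((lam i t - lam i 0) - (lam j t - lam j 0)) := by ring
      rw [this]
      exact (abs_sub _ _).trans (add_le_add_right (abs_sub _ _) _)
    linarith [hlam i t ht, hlam j t ht]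
  -- evolution of the embedding norm
  set S : ℝ → V → ℝ := fun t x => ∑ k ∈ I, ψ k t x ^ 2 with hS
  have hSnorm : ∀ t x, S t x ≤ ‖S t‖ := fun t x =>
    (le_abs_self _).trans (norm_le_pi_norm (S t) x)
  have hmain := norm_sub_le_of_norm_deriv_le_mul_norm (f := S) hc0
    (continuousOn_pi.mpr fun x => continuousOn_finsetSum _ fun k _ =>
      (hψdiff k x).continuousOn.pow 2)
    (fun t ht => hasDerivAt_pi.mpr fun x => hevol x t ht)
    (fun t ht => (pi_norm_le_iff_of_nonneg (by positivity)).mpr fun x => by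
      have htI := Set.Ioo_subset_Icc_self ht
      have := abs_evolution_le hEnonneg (fun k => hlambound k t htI) (by positivity) (hr t htI)
        (hSnorm t) (hgap t htI) x
      rwa [hTr] at this)
  have hSzero : ‖S 0‖ ≤ Q * (1 + 2 * ε1) :=
    (pi_norm_le_iff_of_nonneg (by positivity)).mpr fun x => by
      rw [Real.norm_eq_abs, abs_of_nonneg (Finset.sum_nonneg fun k _ => sq_nonneg _)]
      exact hS0 x
  have hdiff : ∀ x, |S 1 x - S 0 x| < Q * hash / 2 := by
    intro x
    calc |S 1 x - S 0 x| ≤ ‖S 1 - S 0‖ := norm_le_pi_norm (S 1 - S 0) x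
      _ ≤ ‖S 0‖ * (Real.exp c - 1) := hmain
      _ ≤ Q * (1 + 2 * ε1) * (Real.exp c - 1) :=
        mul_le_mul_of_nonneg_right hSzero (by linarith [Real.add_one_le_exp c])
      _ < Q * (1 + 2 * ε1) * u := mul_lt_mul_of_pos_left hexp (by positivity)
      _ = Q * hash / 2 := by rw [hu]; field_simp
  refine ⟨Q * (b + hash / 2), fun x hx => ?_, fun x hx => ?_⟩
  · have h1 : Q * (b + hash) ≤ S 0 x := hClow x hx
    have h2 := (abs_lt.mp (hdiff x)).1
    change _ < S 1 x
    linarith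
  · have h1 : S 0 x ≤ Q * b := hBup x hx
    have h2 := (abs_lt.mp (hdiff x)).2
    change S 1 x < _
    linarith
end
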